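/- Let 𝔄₁ and 𝔄₂ be *-subalgebras of 𝔄, each containing 𝔅, which are c-free with respect to (Φ, Ψ), and suppose that the restrictions of Φ to 𝔄₁ and to 𝔄₂ and the restrictions of Ψ to 𝔄₁ and to 𝔄₂ are positive. Then for every element a of the *-subalgebra of 𝔄 generated by 𝔄₁ ∪ 𝔄₂ one has Φ(a*a) ≥ 0 in 𝔅 and Ψ(a*a) ≥ 0 in 𝔇. -/

import Mathlib

/-!
STATEMENT 1: Let `𝔅` be a unital C*-algebra, `𝔇` a C*-subalgebra of `𝔅` containing its
unit, and `𝔄` a unital complex *-algebra containing `𝔅` (via a unital *-algebra embedding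
`ι`), endowed with conditional expectations `Φ : 𝔄 → 𝔅` and `Ψ : 𝔄 → 𝔇`.  If `𝔄₁, 𝔄₂`
are *-subalgebras of `𝔄` containing `𝔅` which are c-free with respect to `(Φ, Ψ)`, and
the restrictions of `Φ` and `Ψ` to `𝔄₁` and to `𝔄₂` are positive, then `Φ(a*a) ≥ 0`
and `Ψ(a*a) ≥ 0` for every `a` in the *-subalgebra generated by `𝔄₁ ∪ 𝔄₂`.
-/

/-- The family `S` of *-subalgebras of `A` is conditionally free (c-free) with respect to
`(Φ, Ψ)`: for every `n ≥ 1`, every tuple `a₁, …, aₙ` with `aⱼ ∈ S (ε j)`,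
`ε(1) ≠ ε(2) ≠ … ≠ ε(n)` (adjacent indices distinct) and `Ψ(aⱼ) = 0`, one has
`Ψ(a₁⋯aₙ) = 0` and `Φ(a₁⋯aₙ) = Φ(a₁)⋯Φ(aₙ)`. -/
def IsCFreeFamily {B A I : Type*} [Ring B] [Algebra ℂ B] [Ring A] [Algebra ℂ A]
    [StarRing A] [StarModule ℂ A]
    (Φ Ψ : A →ₗ[ℂ] B) (S : I → StarSubalgebra ℂ A) : Prop :=
  ∀ (m : ℕ) (ε : Fin (m + 1) → I), (∀ i : Fin m, ε i.castSucc ≠ ε i.succ) →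
    ∀ a : Fin (m + 1) → A, (∀ j, a j ∈ S (ε j)) → (∀ j, Ψ (a j) = 0) →
      Ψ (List.ofFn a).prod = 0 ∧
      Φ (List.ofFn a).prod = (List.ofFn fun j => Φ (a j)).prod

/-!
Let `cov(u, v) = Φ(u⋆v) - Φ(u)⋆Φ(v)`. By c-freeness, words in `Ψ`-centered letters whose first
letters come from different subalgebras are `cov`-orthogonal. When both first letters `x, x'` come
from the same subalgebra, they can be stripped off:
`cov(xw, x'w') = cov(w, Ψ(x⋆x')w') + Φ(w)⋆ cov(x, x') Φ(w')`.
The matrix `[Ψ(xⱼ⋆xₖ)]` is positive, hence of the form `Q⋆Q` over the C*-algebra `D`, so the first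
terms contribute a sum of values `cov(v, v)` at combinations `v` of shorter words, and the last
terms are `cov(y, y)` for a `y` in a single subalgebra. By induction on the length, `cov(a, a) ≥ 0`
throughout the generated subalgebra, and `Φ(a⋆a) = cov(a, a) + Φ(a)⋆Φ(a) ≥ 0`. The pair `(Ψ, Ψ)` is
c-free as well, which gives the claim for `Ψ`.
-/

open ComplexStarModule

section Hermitian

variable {A B : Type*} [Ring A] [Algebra ℂ A] [StarRing A]
  [CStarAlgebra B] [PartialOrder B] [StarOrderedRing B]

theorem isSelfAdjoint_map_of_map_star_mul_self_nonneg {φ : A →ₗ[ℂ] B}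
    (hφ : ∀ a, 0 ≤ φ (star a * a)) {h : A} (hh : IsSelfAdjoint h) : IsSelfAdjoint (φ h) := by
  have polarization : φ h = (2⁻¹ : ℝ) •
      (φ (star (1 + h) * (1 + h)) - φ (star 1 * 1) - φ (star h * h)) := by
    rw [eq_inv_smul_iff₀ two_ne_zero, two_smul, ← map_add, ← map_sub, ← map_sub, star_add, star_one,
      hh.star_eq]
    congr 1
    noncomm_ring
  have hsa (a : A) : IsSelfAdjoint (φ (star a * a)) := .of_nonneg (hφ a)
  rw [polarization]
  exact (IsSelfAdjoint.all _).smul (((hsa _).sub (hsa _)).sub (hsa _))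

variable [StarModule ℂ A]

theorem map_star_of_map_star_mul_self_nonneg {φ : A →ₗ[ℂ] B}
    (hφ : ∀ a, 0 ≤ φ (star a * a)) (x : A) : φ (star x) = star (φ x) := by
  have hsa (y : selfAdjoint A) : star (φ y) = φ y :=
    (isSelfAdjoint_map_of_map_star_mul_self_nonneg hφ y.2).star_eq
  rw [← realPart_add_I_smul_imaginaryPart x]
  simp only [star_add, star_smul, map_add, map_smul, hsa, selfAdjoint.star_val_eq]

theorem map_star_of_mem_of_nonneg {φ : A →ₗ[ℂ] B} {T : StarSubalgebra ℂ A}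
    (hφ : ∀ a ∈ T, 0 ≤ φ (star a * a)) {x : A} (hx : x ∈ T) : φ (star x) = star (φ x) :=
  map_star_of_map_star_mul_self_nonneg
    (φ := φ ∘ₗ T.subtype.toAlgHom.toLinearMap) (fun a ↦ hφ a a.2) ⟨x, hx⟩

end Hermitian

section MatrixPositivity

theorem exists_eq_star_mul_self_of_star_mul_mul_eq_neg {F : Type*} [CStarAlgebra F] {a : F}
    (ha : IsSelfAdjoint a) (h : ∀ t r : F, star t * a * t = -(star r * r) → r = 0) :
    ∃ s, a = star s * s := by
  let : PartialOrder F := CStarAlgebra.spectralOrder F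
  have : StarOrderedRing F := CStarAlgebra.spectralOrderedRing F
  have hsa : star a⁻ = a⁻ := (CFC.negPart_nonneg a).isSelfAdjoint.star_eq
  obtain ⟨r, hr⟩ := CStarAlgebra.nonneg_iff_eq_star_mul_self.1
    (star_left_conjugate_nonneg (CFC.negPart_nonneg a) a⁻)
  have hconj : star a⁻ * a * a⁻ = -(star r * r) := calc
    star a⁻ * a * a⁻ = a⁻ * (a⁺ - a⁻) * a⁻ := by rw [hsa, CFC.posPart_sub_negPart a ha]
    _ = -(a⁻ * a⁻ * a⁻) := by rw [mul_sub, CFC.negPart_mul_posPart, zero_sub, neg_mul]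
    _ = -(star r * r) := by rw [← hr, hsa]
  have hcube : a⁻ * a⁻ * a⁻ = 0 := by
    simpa [hsa, h _ r hconj] using hr
  have hsq : a⁻ * a⁻ = 0 := by
    rw [← CStarRing.star_mul_self_eq_zero_iff, star_mul, hsa, ← mul_assoc, hcube, zero_mul]
  have hzero : a⁻ = 0 := by rwa [← CStarRing.star_mul_self_eq_zero_iff, hsa]
  exact CStarAlgebra.nonneg_iff_eq_star_mul_self.1 ((CFC.negPart_eq_zero_iff a ha).1 hzero)

theorem exists_eq_sum_star_mul_of_quadratic_nonneg {B n : Type*} [CStarAlgebra B] [PartialOrder B]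
    [StarOrderedRing B] [Fintype n] {D : StarSubalgebra ℂ B} (hD : IsClosed (D : Set B))
    {P : n → n → B} (hPD : ∀ i j, P i j ∈ D) (hP : ∀ i j, star (P i j) = P j i)
    (hpos : ∀ d : n → B, (∀ i, d i ∈ D) → 0 ≤ ∑ i, ∑ j, star (d i) * P i j * d j) :
    ∃ Q : n → n → B, (∀ i j, Q i j ∈ D) ∧ ∀ i j, P i j = ∑ k, star (Q k i) * Q k j := by
  classical
  have := hD
  let : PartialOrder D := CStarAlgebra.spectralOrder D
  have : StarOrderedRing D := CStarAlgebra.spectralOrderedRing D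
  let M : CStarMatrix n n D := CStarMatrix.ofMatrix fun i j ↦ ⟨P i j, hPD i j⟩
  have hM : IsSelfAdjoint M := CStarMatrix.ext fun i j ↦ Subtype.ext (hP j i)
  obtain ⟨Q, hQ⟩ := exists_eq_star_mul_self_of_star_mul_mul_eq_neg hM
    fun T R hTR ↦ CStarMatrix.ext fun k j ↦ by
      have hcol : ∑ i, ∑ l, star (T i j : B) * P i l * T l j =
          -∑ l, star (R l j : B) * R l j := by
        have h := congrArg Subtype.val (congrFun (congrFun hTR j) j)
        simp only [CStarMatrix.mul_apply, CStarMatrix.neg_apply, CStarMatrix.star_apply] at h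
        rw [Finset.sum_comm]
        simpa [Finset.sum_mul, M] using! h
      have hle : ∑ l, star (R l j : B) * R l j ≤ 0 :=
        neg_nonneg.1 (hcol ▸ hpos (fun i ↦ T i j) fun i ↦ (T i j).2)
      have hterm : star (R k j : B) * R k j ≤ 0 :=
        (Finset.single_le_sum (fun l _ ↦ star_mul_self_nonneg (R l j : B))
          (Finset.mem_univ k)).trans hle
      exact Subtype.ext
        ((CStarRing.star_mul_self_eq_zero_iff _).1 (hterm.antisymm (star_mul_self_nonneg _)))
  refine ⟨fun i j ↦ Q i j, fun i j ↦ (Q i j).2, fun i j ↦ ?_⟩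
  have h := congrArg Subtype.val (congrFun (congrFun hQ i) j)
  simpa [CStarMatrix.mul_apply, CStarMatrix.star_apply, M] using! h

end MatrixPositivity

section Covariance

variable {A B : Type*} [Ring A] [Algebra ℂ A] [StarRing A] [Ring B] [Algebra ℂ B] [StarRing B]
  [StarModule ℂ B] {ι : B →⋆ₐ[ℂ] A} {C : StarSubalgebra ℂ B} {φ : A →ₗ[ℂ] B}

/-- `φ` is a conditional expectation of `A` onto the subalgebra `C` of `B`. Since `A` contains `B`
only through `ι`, and expectations onto different subalgebras are to be compared, `φ` is recorded as
a map with values in `B`. -/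
structure IsConditionalExpectation (ι : B →⋆ₐ[ℂ] A) (C : StarSubalgebra ℂ B) (φ : A →ₗ[ℂ] B) :
    Prop where
  mem : ∀ a, φ a ∈ C
  map_mul_mul : ∀ {b b' : B}, b ∈ C → b' ∈ C → ∀ a, φ (ι b * a * ι b') = b * φ a * b'
  map_incl : ∀ {b : B}, b ∈ C → φ (ι b) = b

namespace IsConditionalExpectation

theorem map_one (hφ : IsConditionalExpectation ι C φ) : φ 1 = 1 := by
  simpa using hφ.map_incl (one_mem C)

theorem map_incl_mul (hφ : IsConditionalExpectation ι C φ) {b : B} (hb : b ∈ C) (a : A) :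
    φ (ι b * a) = b * φ a := by
  simpa using hφ.map_mul_mul hb (one_mem C) a

theorem map_mul_incl (hφ : IsConditionalExpectation ι C φ) {b : B} (hb : b ∈ C) (a : A) :
    φ (a * ι b) = φ a * b := by
  simpa using hφ.map_mul_mul (one_mem C) hb a

end IsConditionalExpectation

variable [StarModule ℂ A]

/-- The `B`-valued covariance `(u, v) ↦ φ (u⋆ v) - φ(u)⋆ φ(v)` of the expectation `φ`. -/
def covariance (φ : A →ₗ[ℂ] B) : A →ₗ⋆[ℂ] A →ₗ[ℂ] B :=
  LinearMap.mk₂'ₛₗ (starRingEnd ℂ) (RingHom.id ℂ) (fun u v ↦ φ (star u * v) - star (φ u) * φ v)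
    (fun u u' v ↦ by simp only [star_add, add_mul, map_add]; abel)
    (fun c u v ↦ by simp [smul_sub])
    (fun u v v' ↦ by simp only [mul_add, map_add]; abel)
    (fun c u v ↦ by simp [smul_sub])

theorem covariance_apply (φ : A →ₗ[ℂ] B) (u v : A) :
    covariance φ u v = φ (star u * v) - star (φ u) * φ v := rfl

theorem map_star_mul_eq_covariance_add (φ : A →ₗ[ℂ] B) (u v : A) :
    φ (star u * v) = covariance φ u v + star (φ u) * φ v :=
  (sub_add_cancel _ _).symm

theorem covariance_sum_sum {k k' : Type*} (φ : A →ₗ[ℂ] B) (s : Finset k) (t : Finset k')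
    (u : k → A) (v : k' → A) :
    covariance φ (∑ i ∈ s, u i) (∑ j ∈ t, v j) = ∑ i ∈ s, ∑ j ∈ t, covariance φ (u i) (v j) := by
  rw [LinearMap.map_sum₂]
  simp only [map_sum]

namespace IsConditionalExpectation

theorem covariance_incl_left (hφ : IsConditionalExpectation ι C φ) {b : B} (hb : b ∈ C) (v : A) :
    covariance φ (ι b) v = 0 := by
  rw [covariance_apply, ← map_star, hφ.map_incl_mul (star_mem hb), hφ.map_incl hb, sub_self]

theorem covariance_incl_right (hφ : IsConditionalExpectation ι C φ) {b : B} (hb : b ∈ C) (u : A) :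
    covariance φ u (ι b) = covariance φ u 1 * b := by
  rw [covariance_apply, covariance_apply, hφ.map_mul_incl hb, hφ.map_incl hb, hφ.map_one, mul_one,
    mul_one, sub_mul]

theorem covariance_incl_mul_left (hφ : IsConditionalExpectation ι C φ) {b : B} (hb : b ∈ C)
    (u v : A) : covariance φ (ι b * u) v = covariance φ u (ι (star b) * v) := by
  rw [covariance_apply, covariance_apply, hφ.map_incl_mul hb, hφ.map_incl_mul (star_mem hb),
    star_mul, star_mul, map_star, mul_assoc, mul_assoc]

theorem covariance_mul_incl (hφ : IsConditionalExpectation ι C φ) {b b' : B} (hb : b ∈ C)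
    (hb' : b' ∈ C) (u v : A) :
    covariance φ (u * ι b) (v * ι b') = star b * covariance φ u v * b' := by
  have h : star (u * ι b) * (v * ι b') = ι (star b) * (star u * v) * ι b' := by
    rw [star_mul, map_star]
    noncomm_ring
  rw [covariance_apply, covariance_apply, h, hφ.map_mul_mul (star_mem hb) hb', hφ.map_mul_incl hb,
    hφ.map_mul_incl hb', star_mul]
  noncomm_ring

end IsConditionalExpectation

end Covariance

section Words

variable {I A : Type*} [Ring A]

/-- The element of `A` spelled by a word. A letter is recorded together with the index of the
subalgebra it is taken from, since these subalgebras overlap. -/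
def wordProd (l : List (I × A)) : A := (l.map Prod.snd).prod

@[simp] theorem wordProd_nil : wordProd ([] : List (I × A)) = 1 := rfl

@[simp] theorem wordProd_cons (p : I × A) (l : List (I × A)) :
    wordProd (p :: l) = p.2 * wordProd l := by
  simp [wordProd]

theorem wordProd_append (l l' : List (I × A)) : wordProd (l ++ l') = wordProd l * wordProd l' := by
  simp [wordProd]

variable [StarRing A]

/-- The adjoint word, which spells the adjoint element. -/
def starWord (l : List (I × A)) : List (I × A) := (l.map fun p ↦ (p.1, star p.2)).reverse

theorem starWord_cons (p : I × A) (l : List (I × A)) :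
    starWord (p :: l) = starWord l ++ [(p.1, star p.2)] := by
  simp [starWord]

theorem forall_mem_starWord {l : List (I × A)} {motive : I × A → Prop}
    (h : ∀ p ∈ l, motive (p.1, star p.2)) : ∀ p ∈ starWord l, motive p := by
  intro p hp
  obtain ⟨q, hq, rfl⟩ := List.mem_map.1 (List.mem_reverse.1 hp)
  exact h q hq

theorem wordProd_starWord (l : List (I × A)) : wordProd (starWord l) = star (wordProd l) := by
  induction l with
  | nil => simp [starWord]
  | cons p l ih => simp [starWord_cons, wordProd_append, ih]

end Words

section CenteredWord

variable {I A B : Type*} [Ring A] [Algebra ℂ A] [StarRing A] [StarModule ℂ A]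
  [Ring B] [Algebra ℂ B] {Φ Ψ : A →ₗ[ℂ] B} {S : I → StarSubalgebra ℂ A} {l l' : List (I × A)}

/-- Alternating words with letters in the kernel of `Ψ`, the letter `(i, x)` coming from `S i`. -/
structure IsCenteredWord (Ψ : A →ₗ[ℂ] B) (S : I → StarSubalgebra ℂ A) (l : List (I × A)) :
    Prop where
  isChain : l.IsChain fun p q ↦ p.1 ≠ q.1
  mem : ∀ p ∈ l, p.2 ∈ S p.1
  map_eq_zero : ∀ p ∈ l, Ψ p.2 = 0

theorem isCenteredWord_nil : IsCenteredWord Ψ S [] where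
  isChain := .nil
  mem := by simp
  map_eq_zero := by simp

theorem isCenteredWord_cons {p : I × A} :
    IsCenteredWord Ψ S (p :: l) ↔ p.2 ∈ S p.1 ∧ Ψ p.2 = 0 ∧ (∀ q ∈ l.head?, p.1 ≠ q.1) ∧
      IsCenteredWord Ψ S l := by
  constructor
  · rintro ⟨hchain, hmem, hker⟩
    rw [List.isChain_cons] at hchain
    rw [List.forall_mem_cons] at hmem hker
    exact ⟨hmem.1, hker.1, hchain.1, hchain.2, hmem.2, hker.2⟩
  · rintro ⟨hp, hp0, hhead, hl⟩
    exact ⟨List.isChain_cons.2 ⟨hhead, hl.isChain⟩, List.forall_mem_cons.2 ⟨hp, hl.mem⟩,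
      List.forall_mem_cons.2 ⟨hp0, hl.map_eq_zero⟩⟩

theorem IsCenteredWord.append_starWord (hΨ : ∀ i, ∀ x ∈ S i, Ψ x = 0 → Ψ (star x) = 0)
    (hl : IsCenteredWord Ψ S l) (hl' : IsCenteredWord Ψ S l')
    (hhead : ∀ p ∈ l.head?, ∀ q ∈ l'.head?, p.1 ≠ q.1) :
    IsCenteredWord Ψ S (starWord l ++ l') where
  isChain := by
    rw [List.isChain_append, starWord, List.isChain_reverse, List.isChain_map]
    refine ⟨hl.isChain.imp fun _ _ h ↦ h.symm, hl'.isChain, fun p hp q hq ↦ ?_⟩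
    simp only [List.getLast?_reverse, List.head?_map, Option.mem_def, Option.map_eq_some_iff] at hp
    obtain ⟨p, hp, rfl⟩ := hp
    exact hhead p hp q hq
  mem := List.forall_mem_append.2
    ⟨forall_mem_starWord fun p hp ↦ star_mem (hl.mem p hp), hl'.mem⟩
  map_eq_zero := List.forall_mem_append.2
    ⟨forall_mem_starWord fun p hp ↦ hΨ p.1 p.2 (hl.mem p hp) (hl.map_eq_zero p hp),
      hl'.map_eq_zero⟩

theorem IsCenteredWord.prod_map_starWord [StarRing B]
    (hΦ : ∀ i, ∀ x ∈ S i, Φ (star x) = star (Φ x)) (hl : IsCenteredWord Ψ S l) :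
    ((starWord l).map fun p ↦ Φ p.2).prod = star (l.map fun p ↦ Φ p.2).prod := by
  induction l with
  | nil => simp [starWord]
  | cons p l ih =>
    rw [isCenteredWord_cons] at hl
    simp [starWord_cons, ih hl.2.2.2, hΦ _ _ hl.1]

namespace IsCFreeFamily

theorem map_wordProd_of_ne_nil (hfree : IsCFreeFamily Φ Ψ S) (hl : IsCenteredWord Ψ S l)
    (hne : l ≠ []) : Ψ (wordProd l) = 0 ∧ Φ (wordProd l) = (l.map fun p ↦ Φ p.2).prod := by
  obtain ⟨p, l, rfl⟩ := List.exists_cons_of_ne_nil hne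
  rw [wordProd, ← List.ofFn_getElem_eq_map _ Prod.snd, ← List.ofFn_getElem_eq_map]
  exact hfree l.length (fun j ↦ (p :: l)[j].1)
    (fun j ↦ List.isChain_iff_getElem.1 hl.isChain j (Nat.succ_lt_succ j.2))
    (fun j ↦ (p :: l)[j].2) (fun j ↦ hl.mem _ (List.getElem_mem _))
    (fun j ↦ hl.map_eq_zero _ (List.getElem_mem _))

theorem map_wordProd (hfree : IsCFreeFamily Φ Ψ S) (hΦ : Φ 1 = 1) (hl : IsCenteredWord Ψ S l) :
    Φ (wordProd l) = (l.map fun p ↦ Φ p.2).prod := by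
  rcases eq_or_ne l [] with rfl | hne
  · simpa using hΦ
  · exact (hfree.map_wordProd_of_ne_nil hl hne).2

theorem self (hfree : IsCFreeFamily Φ Ψ S) : IsCFreeFamily Ψ Ψ S := by
  intro m ε hε a ha ha0
  have h := (hfree m ε hε a ha ha0).1
  refine ⟨h, h.trans ?_⟩
  simp [ha0]

theorem covariance_wordProd [StarRing B] [StarModule ℂ B] (hfree : IsCFreeFamily Φ Ψ S)
    (hΦ : Φ 1 = 1)
    (hΦstar : ∀ i, ∀ x ∈ S i, Φ (star x) = star (Φ x))
    (hΨstar : ∀ i, ∀ x ∈ S i, Ψ x = 0 → Ψ (star x) = 0)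
    (hl : IsCenteredWord Ψ S l) (hl' : IsCenteredWord Ψ S l')
    (hhead : ∀ p ∈ l.head?, ∀ q ∈ l'.head?, p.1 ≠ q.1) :
    covariance Φ (wordProd l) (wordProd l') = 0 := by
  rw [covariance_apply, ← wordProd_starWord, ← wordProd_append,
    hfree.map_wordProd hΦ (hl.append_starWord hΨstar hl' hhead), hfree.map_wordProd hΦ hl,
    hfree.map_wordProd hΦ hl', List.map_append, List.prod_append, hl.prod_map_starWord hΦstar,
    sub_self]

end IsCFreeFamily

end CenteredWord

section SpanMul

variable {R M : Type*} [CommSemiring R] [Semiring M] [Algebra R M]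

theorem mul_mem_of_mem_span {s : Set M} {W : Submodule R M} {x u : M} (h : ∀ v ∈ s, x * v ∈ W)
    (hu : u ∈ Submodule.span R s) : x * u ∈ W :=
  (Submodule.span_le.2 h : Submodule.span R s ≤ W.comap (LinearMap.mulLeft R x)) hu

theorem exists_sum_mul_eq_of_mem_mul {P Q : Submodule R M} {u : M} (hu : u ∈ P * Q) :
    ∃ (k : ℕ) (x y : Fin k → M), (∀ j, x j ∈ P) ∧ (∀ j, y j ∈ Q) ∧ ∑ j, x j * y j = u := by
  rw [Submodule.mul_eq_span_mul_set, Submodule.mem_span_set'] at hu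
  obtain ⟨k, c, g, rfl⟩ := hu
  choose x hx y hy hxy using fun j ↦ Set.mem_mul.1 (g j).2
  exact ⟨k, fun j ↦ c j • x j, y, fun j ↦ P.smul_mem _ (hx j), hy,
    Finset.sum_congr rfl fun j _ ↦ by rw [smul_mul_assoc, hxy]⟩

end SpanMul

section WordSpan

variable {I A B : Type*} [Ring A] [Algebra ℂ A] [StarRing A] [StarModule ℂ A]
  [Ring B] [Algebra ℂ B] {Ψ : A →ₗ[ℂ] B} {S : I → StarSubalgebra ℂ A} {J J' : Set I} {i : I}
  {m n : ℕ} {u w x : A}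

/-- The kernel of `Ψ` in a *-subalgebra. -/
def centeredPart (Ψ : A →ₗ[ℂ] B) (T : StarSubalgebra ℂ A) : Submodule ℂ A :=
  Subalgebra.toSubmodule T.toSubalgebra ⊓ LinearMap.ker Ψ

theorem mem_centeredPart {T : StarSubalgebra ℂ A} :
    x ∈ centeredPart Ψ T ↔ x ∈ T ∧ Ψ x = 0 := Iff.rfl

variable [StarRing B] [StarModule ℂ B] {ι : B →⋆ₐ[ℂ] A} {D : StarSubalgebra ℂ B} {d : B}

/-- The linear span of the products `ι d * w`, where `d ∈ D` and `w` is a centered word of length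
less than `n` which is empty or has its first letter in some `S j`, `j ∈ J`. In particular
`wordSpan ι D Ψ S J 0 = ⊥`. -/
def wordSpan (ι : B →⋆ₐ[ℂ] A) (D : StarSubalgebra ℂ B) (Ψ : A →ₗ[ℂ] B)
    (S : I → StarSubalgebra ℂ A) (J : Set I) (n : ℕ) : Submodule ℂ A :=
  Submodule.span ℂ {a | ∃ d ∈ D, ∃ l, IsCenteredWord Ψ S l ∧ (∀ p ∈ l.head?, p.1 ∈ J) ∧
    l.length < n ∧ ι d * wordProd l = a}

theorem wordSpan_mono (hJ : J ⊆ J') (hmn : m ≤ n) :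
    wordSpan ι D Ψ S J m ≤ wordSpan ι D Ψ S J' n :=
  Submodule.span_mono fun _ ⟨d, hd, l, hl, hhead, hlen, h⟩ ↦
    ⟨d, hd, l, hl, fun p hp ↦ hJ (hhead p hp), hlen.trans_le hmn, h⟩

theorem wordSpan_zero : wordSpan ι D Ψ S J 0 = ⊥ := by
  simp [wordSpan]

theorem incl_mem_wordSpan (hd : d ∈ D) (J : Set I) (n : ℕ) :
    ι d ∈ wordSpan ι D Ψ S J (n + 1) :=
  Submodule.subset_span ⟨d, hd, [], isCenteredWord_nil, by simp, by simp, by simp⟩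

theorem incl_mul_mem_wordSpan (hd : d ∈ D) (hu : u ∈ wordSpan ι D Ψ S J n) :
    ι d * u ∈ wordSpan ι D Ψ S J n := by
  refine mul_mem_of_mem_span ?_ hu
  rintro _ ⟨d', hd', l, hl, hhead, hlen, rfl⟩
  exact Submodule.subset_span
    ⟨d * d', mul_mem hd hd', l, hl, hhead, hlen, by rw [map_mul, mul_assoc]⟩

theorem centeredPart_mul_wordSpan_le (hΨ : IsConditionalExpectation ι D Ψ)
    (hS : ∀ d ∈ D, ι d ∈ S i) :
    centeredPart Ψ (S i) * wordSpan ι D Ψ S {i}ᶜ n ≤ wordSpan ι D Ψ S {i} (n + 1) := by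
  refine Submodule.mul_le.2 fun x hx w hw ↦ mul_mem_of_mem_span ?_ hw
  rintro _ ⟨d, hd, l, hl, hhead, hlen, rfl⟩
  obtain ⟨hxS, hx0⟩ := mem_centeredPart.1 hx
  have hcons : IsCenteredWord Ψ S ((i, x * ι d) :: l) := isCenteredWord_cons.2
    ⟨mul_mem hxS (hS d hd), by rw [hΨ.map_mul_incl hd, hx0, zero_mul],
      fun p hp h ↦ hhead p hp h.symm, hl⟩
  exact Submodule.subset_span
    ⟨1, one_mem D, _, hcons, by simp, Nat.succ_lt_succ hlen, by simp [mul_assoc]⟩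

theorem wordSpan_succ_le (hΨ : IsConditionalExpectation ι D Ψ) (hS : ∀ i, ∀ d ∈ D, ι d ∈ S i) :
    wordSpan ι D Ψ S J (n + 1) ≤
      (Subalgebra.toSubmodule D.toSubalgebra).map ι.toAlgHom.toLinearMap ⊔
        ⨆ i, centeredPart Ψ (S i) * wordSpan ι D Ψ S {i}ᶜ n := by
  refine Submodule.span_le.2 ?_
  rintro _ ⟨d, hd, l, hl, -, hlen, rfl⟩
  cases l with
  | nil => exact Submodule.mem_sup_left ⟨d, hd, by simp⟩
  | cons p l =>
    obtain ⟨hp, hp0, hhead, hl⟩ := isCenteredWord_cons.1 hl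
    refine Submodule.mem_sup_right (Submodule.mem_iSup_of_mem p.1 ?_)
    have hletter : ι d * p.2 ∈ centeredPart Ψ (S p.1) :=
      mem_centeredPart.2 ⟨mul_mem (hS p.1 d hd) hp, by simp [hΨ.map_incl_mul hd, hp0]⟩
    have hword : wordProd l ∈ wordSpan ι D Ψ S {p.1}ᶜ n := Submodule.subset_span
      ⟨1, one_mem D, l, hl, fun q hq h ↦ hhead q hq h.symm, Nat.lt_of_succ_lt_succ hlen, by simp⟩
    rw [wordProd_cons, ← mul_assoc]
    exact Submodule.mul_mem_mul hletter hword

theorem sub_incl_map_mem_centeredPart (hΨ : IsConditionalExpectation ι D Ψ)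
    (hS : ∀ d ∈ D, ι d ∈ S i) (hx : x ∈ S i) :
    x - ι (Ψ x) ∈ centeredPart Ψ (S i) :=
  mem_centeredPart.2 ⟨sub_mem hx (hS _ (hΨ.mem x)), by simp [hΨ.map_incl (hΨ.mem x)]⟩

theorem mul_mem_wordSpan_of_compl (hΨ : IsConditionalExpectation ι D Ψ)
    (hS : ∀ d ∈ D, ι d ∈ S i) (hx : x ∈ S i) (hw : w ∈ wordSpan ι D Ψ S {i}ᶜ n) :
    x * w ∈ wordSpan ι D Ψ S Set.univ (n + 1) := by
  rw [← sub_add_cancel x (ι (Ψ x)), add_mul]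
  exact add_mem (wordSpan_mono (Set.subset_univ _) le_rfl (centeredPart_mul_wordSpan_le hΨ hS
    (Submodule.mul_mem_mul (sub_incl_map_mem_centeredPart hΨ hS hx) hw)))
    (wordSpan_mono (Set.subset_univ _) n.le_succ (incl_mul_mem_wordSpan (hΨ.mem x) hw))

theorem mul_mem_wordSpan (hΨ : IsConditionalExpectation ι D Ψ)
    (hS : ∀ d ∈ D, ι d ∈ S i) (hx : x ∈ S i) (hu : u ∈ wordSpan ι D Ψ S Set.univ n) :
    x * u ∈ wordSpan ι D Ψ S Set.univ (n + 1) := by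
  refine mul_mem_of_mem_span ?_ hu
  rintro _ ⟨d, hd, l, hl, -, hlen, rfl⟩
  have hmem {l' : List (I × A)} (hl' : IsCenteredWord Ψ S l') (hhead : ∀ p ∈ l'.head?, i ≠ p.1)
      (hlen' : l'.length < n) : wordProd l' ∈ wordSpan ι D Ψ S {i}ᶜ n := Submodule.subset_span
    ⟨1, one_mem D, l', hl', fun p hp h ↦ hhead p hp h.symm, hlen', by simp⟩
  have hxd : x * ι d ∈ S i := mul_mem hx (hS d hd)
  rw [← mul_assoc]
  -- A first letter in `S i` is merged into `x`; the remaining word then starts outside `S i`.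
  by_cases hhead : ∀ p ∈ l.head?, i ≠ p.1
  · exact mul_mem_wordSpan_of_compl hΨ hS hxd (hmem hl hhead hlen)
  cases l with
  | nil => simp at hhead
  | cons p l =>
    obtain ⟨hp, -, hhead', hl⟩ := isCenteredWord_cons.1 hl
    obtain rfl : i = p.1 := by simpa using hhead
    rw [wordProd_cons, ← mul_assoc]
    exact mul_mem_wordSpan_of_compl hΨ hS (mul_mem hxd hp)
      (hmem hl hhead' (Nat.lt_of_succ_lt hlen))

theorem exists_mem_wordSpan_of_mem_adjoin (hΨ : IsConditionalExpectation ι D Ψ)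
    (hS : ∀ i, ∀ d ∈ D, ι d ∈ S i) {a : A} (ha : a ∈ StarAlgebra.adjoin ℂ (⋃ i, (S i : Set A))) :
    ∃ n, a ∈ wordSpan ι D Ψ S Set.univ n := by
  have hmono : Monotone fun n ↦ wordSpan ι D Ψ S Set.univ n :=
    fun _ _ h ↦ wordSpan_mono subset_rfl h
  suffices Subalgebra.toSubmodule (StarAlgebra.adjoin ℂ (⋃ i, (S i : Set A))).toSubalgebra ≤
      ⨆ n, wordSpan ι D Ψ S Set.univ n from
    (Submodule.mem_iSup_of_directed _ hmono.directed_le).1 (this ha)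
  rw [StarAlgebra.adjoin_toSubalgebra, Algebra.adjoin_eq_span, Submodule.span_le]
  suffices ∀ u ∈ Submonoid.closure ((⋃ i, (S i : Set A)) ∪ star (⋃ i, (S i : Set A))),
      ∃ n, u ∈ wordSpan ι D Ψ S Set.univ n from fun u hu ↦
    (this u hu).elim fun n hn ↦ Submodule.mem_iSup_of_mem n hn
  intro u hu
  induction hu using Submonoid.closure_induction_left with
  | one => exact ⟨1, by simpa using incl_mem_wordSpan (ι := ι) (one_mem D) Set.univ 0⟩
  | mul_left x hx u _ ih =>
    obtain ⟨n, hn⟩ := ih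
    obtain ⟨i, hi⟩ : ∃ i, x ∈ S i := by simpa using hx
    exact ⟨n + 1, mul_mem_wordSpan hΨ (hS i) hi hn⟩

end WordSpan

/-- The hypotheses of the positivity theorem for a conditional expectation `Φ` onto `C` and a
conditional expectation `Ψ` onto a closed subalgebra `D` of `C`. They pass from `(Φ, C)` to
`(Ψ, D)`, so what they imply for `Φ` they also imply for `Ψ`. -/
structure IsPositiveCFree {I A B : Type*} [Ring A] [Algebra ℂ A] [StarRing A] [StarModule ℂ A]
    [CStarAlgebra B] [PartialOrder B] (ι : B →⋆ₐ[ℂ] A) (C D : StarSubalgebra ℂ B)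
    (Φ Ψ : A →ₗ[ℂ] B) (S : I → StarSubalgebra ℂ A) : Prop where
  expectation_left : IsConditionalExpectation ι C Φ
  expectation_right : IsConditionalExpectation ι D Ψ
  le : D ≤ C
  isClosed : IsClosed (D : Set B)
  incl_mem : ∀ i, ∀ b ∈ C, ι b ∈ S i
  free : IsCFreeFamily Φ Ψ S
  nonneg_left : ∀ i, ∀ a ∈ S i, 0 ≤ Φ (star a * a)
  nonneg_right : ∀ i, ∀ a ∈ S i, 0 ≤ Ψ (star a * a)

namespace IsPositiveCFree

variable {I A B : Type*} [Ring A] [Algebra ℂ A] [StarRing A] [StarModule ℂ A]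
  [CStarAlgebra B] [PartialOrder B] {ι : B →⋆ₐ[ℂ] A} {C D : StarSubalgebra ℂ B}
  {Φ Ψ : A →ₗ[ℂ] B} {S : I → StarSubalgebra ℂ A} {J J' : Set I} {i : I} {m n : ℕ}

theorem self (H : IsPositiveCFree ι C D Φ Ψ S) : IsPositiveCFree ι D D Ψ Ψ S where
  expectation_left := H.expectation_right
  expectation_right := H.expectation_right
  le := le_rfl
  isClosed := H.isClosed
  incl_mem i b hb := H.incl_mem i b (H.le hb)
  free := H.free.self
  nonneg_left := H.nonneg_right
  nonneg_right := H.nonneg_right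

theorem incl_mem_of_mem_right (H : IsPositiveCFree ι C D Φ Ψ S) (i : I) :
    ∀ d ∈ D, ι d ∈ S i :=
  fun d hd ↦ H.incl_mem i d (H.le hd)

variable [StarOrderedRing B]

theorem map_star_left (H : IsPositiveCFree ι C D Φ Ψ S) {x : A} (hx : x ∈ S i) :
    Φ (star x) = star (Φ x) :=
  map_star_of_mem_of_nonneg (H.nonneg_left i) hx

theorem map_star_right (H : IsPositiveCFree ι C D Φ Ψ S) {x : A} (hx : x ∈ S i) :
    Ψ (star x) = star (Ψ x) :=
  H.self.map_star_left hx

theorem star_mem_centeredPart (H : IsPositiveCFree ι C D Φ Ψ S) {x : A}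
    (hx : x ∈ centeredPart Ψ (S i)) : star x ∈ centeredPart Ψ (S i) := by
  obtain ⟨hxS, hx0⟩ := mem_centeredPart.1 hx
  exact mem_centeredPart.2 ⟨star_mem hxS, by rw [H.map_star_right hxS, hx0, star_zero]⟩

theorem covariance_self_nonneg_of_mem (H : IsPositiveCFree ι C D Φ Ψ S) {y : A} (hy : y ∈ S i) :
    0 ≤ covariance Φ y y := by
  have hmem := H.expectation_left.mem y
  have h := H.nonneg_left i (y - ι (Φ y)) (sub_mem hy (H.incl_mem i _ hmem))
  have hincl : covariance Φ y (ι (Φ y)) = 0 := by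
    rw [H.expectation_left.covariance_incl_right hmem, covariance_apply, mul_one,
      H.map_star_left hy, H.expectation_left.map_one, mul_one, sub_self, zero_mul]
  rw [map_star_mul_eq_covariance_add, map_sub Φ, H.expectation_left.map_incl hmem, sub_self,
    mul_zero, add_zero] at h
  simpa [hincl, H.expectation_left.covariance_incl_left hmem] using h

theorem covariance_wordProd_incl_mul (H : IsPositiveCFree ι C D Φ Ψ S) {l l' : List (I × A)}
    (hl : IsCenteredWord Ψ S l) (hl' : IsCenteredWord Ψ S l')
    (hhead : ∀ p ∈ l.head?, ∀ q ∈ l'.head?, p.1 ≠ q.1) {d : B} (hd : d ∈ D) :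
    covariance Φ (wordProd l) (ι d * wordProd l') = 0 := by
  have horth {l' : List (I × A)} (hl' : IsCenteredWord Ψ S l')
      (hhead : ∀ p ∈ l.head?, ∀ q ∈ l'.head?, p.1 ≠ q.1) :
      covariance Φ (wordProd l) (wordProd l') = 0 :=
    H.free.covariance_wordProd H.expectation_left.map_one (fun i x hx ↦ H.map_star_left hx)
      (fun i x hx hx0 ↦ by rw [H.map_star_right hx, hx0, star_zero]) hl hl' hhead
  cases l' with
  | nil =>
    rw [wordProd_nil, mul_one, H.expectation_left.covariance_incl_right (H.le hd), ← wordProd_nil,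
      horth hl' hhead, zero_mul]
  | cons q l' =>
    obtain ⟨hq, hq0, hhead', hl'⟩ := isCenteredWord_cons.1 hl'
    have hcons : IsCenteredWord Ψ S ((q.1, ι d * q.2) :: l') := isCenteredWord_cons.2
      ⟨mul_mem (H.incl_mem_of_mem_right q.1 d hd) hq,
        by rw [H.expectation_right.map_incl_mul hd, hq0, mul_zero], hhead', hl'⟩
    simpa [mul_assoc] using horth hcons (by simpa using hhead)

theorem covariance_eq_zero_of_disjoint (H : IsPositiveCFree ι C D Φ Ψ S) (hJ : Disjoint J J')
    {u v : A} (hu : u ∈ wordSpan ι D Ψ S J m) (hv : v ∈ wordSpan ι D Ψ S J' n) :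
    covariance Φ u v = 0 := by
  induction hu using Submodule.span_induction with
  | mem u hu =>
    obtain ⟨d, hd, l, hl, hhead, -, rfl⟩ := hu
    suffices wordSpan ι D Ψ S J' n ≤ LinearMap.ker (covariance Φ (ι d * wordProd l)) from this hv
    refine Submodule.span_le.2 ?_
    rintro _ ⟨d', hd', l', hl', hhead', -, rfl⟩
    have hne : ∀ p ∈ l.head?, ∀ q ∈ l'.head?, p.1 ≠ q.1 := fun p hp q hq ↦
      hJ.ne_of_mem (hhead p hp) (hhead' q hq)
    rw [SetLike.mem_coe, LinearMap.mem_ker,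
      H.expectation_left.covariance_incl_mul_left (H.le hd), ← mul_assoc, ← map_mul]
    exact H.covariance_wordProd_incl_mul hl hl' hne (mul_mem (star_mem hd) hd')
  | zero => simp
  | add u u' _ _ hu hu' => simp [hu, hu']
  | smul c u _ hu => simp [hu]

theorem map_mul_of_mem_wordSpan (H : IsPositiveCFree ι C D Φ Ψ S) {x w : A}
    (hx : x ∈ centeredPart Ψ (S i)) (hw : w ∈ wordSpan ι D Ψ S {i}ᶜ n) :
    Φ (x * w) = Φ x * Φ w := by
  have hone : (1 : A) ∈ wordSpan ι D Ψ S {i}ᶜ 1 := by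
    simpa using incl_mem_wordSpan (ι := ι) (one_mem D) {i}ᶜ 0
  have hstar : star x ∈ wordSpan ι D Ψ S {i} 2 := by
    simpa using centeredPart_mul_wordSpan_le H.expectation_right (H.incl_mem_of_mem_right i)
      (Submodule.mul_mem_mul (H.star_mem_centeredPart hx) hone)
  have h := map_star_mul_eq_covariance_add Φ (star x) w
  rwa [H.covariance_eq_zero_of_disjoint disjoint_compl_right hstar hw, zero_add, star_star,
    H.map_star_left (mem_centeredPart.1 hx).1, star_star] at h

theorem map_star_mul_mul (H : IsPositiveCFree ι C D Φ Ψ S) {w c w' : A}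
    (hw : w ∈ wordSpan ι D Ψ S {i}ᶜ n) (hc : c ∈ centeredPart Ψ (S i))
    (hw' : w' ∈ wordSpan ι D Ψ S {i}ᶜ n) :
    Φ (star w * (c * w')) = star (Φ w) * Φ c * Φ w' := by
  have hcw' := centeredPart_mul_wordSpan_le H.expectation_right (H.incl_mem_of_mem_right i)
    (Submodule.mul_mem_mul hc hw')
  rw [map_star_mul_eq_covariance_add,
    H.covariance_eq_zero_of_disjoint disjoint_compl_left hw hcw', zero_add,
    H.map_mul_of_mem_wordSpan hc hw', mul_assoc]

theorem covariance_mul_mul (H : IsPositiveCFree ι C D Φ Ψ S) {x x' w w' : A}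
    (hx : x ∈ centeredPart Ψ (S i)) (hx' : x' ∈ centeredPart Ψ (S i))
    (hw : w ∈ wordSpan ι D Ψ S {i}ᶜ n) (hw' : w' ∈ wordSpan ι D Ψ S {i}ᶜ n) :
    covariance Φ (x * w) (x' * w') = covariance Φ w (ι (Ψ (star x * x')) * w') +
      covariance Φ (x * ι (Φ w)) (x' * ι (Φ w')) := by
  set d := Ψ (star x * x')
  have hd : d ∈ D := H.expectation_right.mem _
  have hc : star x * x' - ι d ∈ centeredPart Ψ (S i) :=
    sub_incl_map_mem_centeredPart H.expectation_right (H.incl_mem_of_mem_right i)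
      (mul_mem (star_mem (mem_centeredPart.1 hx).1) (mem_centeredPart.1 hx').1)
  have hsplit : star (x * w) * (x' * w') =
      star w * (ι d * w') + star w * ((star x * x' - ι d) * w') := by
    rw [star_mul]
    noncomm_ring
  rw [H.expectation_left.covariance_mul_incl (H.expectation_left.mem w)
    (H.expectation_left.mem w')]
  simp only [covariance_apply]
  rw [hsplit, map_add, H.map_star_mul_mul hw hc hw', map_sub, H.expectation_left.map_incl (H.le hd),
    H.map_mul_of_mem_wordSpan hx hw, H.map_mul_of_mem_wordSpan hx' hw',
    H.expectation_left.map_incl_mul (H.le hd), star_mul]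
  noncomm_ring

theorem exists_map_star_mul_eq_sum (H : IsPositiveCFree ι C D Φ Ψ S) {k : Type*} [Fintype k]
    {x : k → A} (hx : ∀ j, x j ∈ S i) :
    ∃ Q : k → k → B, (∀ m j, Q m j ∈ D) ∧
      ∀ j j', Ψ (star (x j) * x j') = ∑ m, star (Q m j) * Q m j' := by
  refine exists_eq_sum_star_mul_of_quadratic_nonneg H.isClosed
    (fun j j' ↦ H.expectation_right.mem _) (fun j j' ↦ ?_) (fun d hd ↦ ?_)
  · rw [← H.map_star_right (mul_mem (star_mem (hx j)) (hx j')), star_mul, star_star]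
  · have hmem : ∑ j, x j * ι (d j) ∈ S i :=
      sum_mem fun j _ ↦ mul_mem (hx j) (H.incl_mem_of_mem_right i _ (hd j))
    refine (H.nonneg_right i _ hmem).trans_eq ?_
    rw [star_sum, Finset.sum_mul_sum, map_sum]
    refine Finset.sum_congr rfl fun j _ ↦ ?_
    rw [map_sum]
    refine Finset.sum_congr rfl fun j' _ ↦ ?_
    rw [← H.expectation_right.map_mul_mul (star_mem (hd j)) (hd j'), map_star, star_mul]
    noncomm_ring

theorem covariance_sum_self_nonneg (H : IsPositiveCFree ι C D Φ Ψ S)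
    (hn : ∀ v ∈ wordSpan ι D Ψ S {i}ᶜ n, 0 ≤ covariance Φ v v) {k : Type*} [Fintype k] {x w : k → A}
    (hx : ∀ j, x j ∈ centeredPart Ψ (S i)) (hw : ∀ j, w j ∈ wordSpan ι D Ψ S {i}ᶜ n) :
    0 ≤ covariance Φ (∑ j, x j * w j) (∑ j, x j * w j) := by
  have hxS (j) : x j ∈ S i := (mem_centeredPart.1 (hx j)).1
  obtain ⟨Q, hQ, hgram⟩ := H.exists_map_star_mul_eq_sum hxS
  let v (m : k) : A := ∑ j, ι (Q m j) * w j
  let y : A := ∑ j, x j * ι (Φ (w j))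
  have hv (m) : v m ∈ wordSpan ι D Ψ S {i}ᶜ n :=
    sum_mem fun j _ ↦ incl_mul_mem_wordSpan (hQ m j) (hw j)
  have hy : y ∈ S i :=
    sum_mem fun j _ ↦ mul_mem (hxS j) (H.incl_mem i _ (H.expectation_left.mem _))
  have hvv : ∑ m, covariance Φ (v m) (v m) =
      ∑ j, ∑ j', covariance Φ (w j) (ι (Ψ (star (x j) * x j')) * w j') := by
    have hterm (m j j') : covariance Φ (ι (Q m j) * w j) (ι (Q m j') * w j') =
        covariance Φ (w j) (ι (star (Q m j) * Q m j') * w j') := by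
      rw [H.expectation_left.covariance_incl_mul_left (H.le (hQ m j)), ← mul_assoc, ← map_mul]
    simp only [v, covariance_sum_sum, hterm]
    simp only [hgram, map_sum, Finset.sum_mul]
    rw [Finset.sum_comm]
    exact Finset.sum_congr rfl fun j _ ↦ Finset.sum_comm
  have hsum : covariance Φ (∑ j, x j * w j) (∑ j, x j * w j) =
      ∑ m, covariance Φ (v m) (v m) + covariance Φ y y := by
    simp only [hvv, y, covariance_sum_sum, H.covariance_mul_mul (hx _) (hx _) (hw _) (hw _),
      Finset.sum_add_distrib]
  rw [hsum]
  exact add_nonneg (Finset.sum_nonneg fun m _ ↦ hn _ (hv m)) (H.covariance_self_nonneg_of_mem hy)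

theorem covariance_self_nonneg_of_mem_mul (H : IsPositiveCFree ι C D Φ Ψ S)
    (hn : ∀ v ∈ wordSpan ι D Ψ S {i}ᶜ n, 0 ≤ covariance Φ v v) {u : A}
    (hu : u ∈ centeredPart Ψ (S i) * wordSpan ι D Ψ S {i}ᶜ n) : 0 ≤ covariance Φ u u := by
  obtain ⟨k, x, w, hx, hw, rfl⟩ := exists_sum_mul_eq_of_mem_mul hu
  exact H.covariance_sum_self_nonneg hn hx hw

theorem covariance_sum_self (H : IsPositiveCFree ι C D Φ Ψ S) {s : Finset I} {u : I → A}
    (hu : ∀ i, u i ∈ wordSpan ι D Ψ S {i} n) :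
    covariance Φ (∑ i ∈ s, u i) (∑ i ∈ s, u i) = ∑ i ∈ s, covariance Φ (u i) (u i) := by
  rw [covariance_sum_sum]
  refine Finset.sum_congr rfl fun i hi ↦ Finset.sum_eq_single_of_mem i hi fun j _ hji ↦ ?_
  exact H.covariance_eq_zero_of_disjoint (Set.disjoint_singleton.2 hji.symm) (hu i) (hu j)

theorem covariance_incl_add_self (H : IsPositiveCFree ι C D Φ Ψ S) {d : B} (hd : d ∈ D) {u : A}
    (hu : u ∈ wordSpan ι D Ψ S Set.univ n) :
    covariance Φ (ι d + u) (ι d + u) = covariance Φ u u := by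
  have hright : covariance Φ u (ι d) = 0 := H.covariance_eq_zero_of_disjoint
    (Set.disjoint_empty Set.univ) hu (incl_mem_wordSpan hd ∅ 0)
  simp only [map_add, LinearMap.add_apply, H.expectation_left.covariance_incl_left (H.le hd),
    hright, zero_add]

theorem covariance_self_nonneg (H : IsPositiveCFree ι C D Φ Ψ S) {u : A}
    (hu : u ∈ wordSpan ι D Ψ S Set.univ n) : 0 ≤ covariance Φ u u := by
  induction n generalizing u with
  | zero =>
    rw [wordSpan_zero, Submodule.mem_bot] at hu
    simp [hu]
  | succ n ih =>
    obtain ⟨_, ⟨d, hd, rfl⟩, v, hv, rfl⟩ := Submodule.mem_sup.1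
      (wordSpan_succ_le H.expectation_right H.incl_mem_of_mem_right hu)
    obtain ⟨f, hf, rfl⟩ := (Submodule.mem_iSup_iff_exists_finsupp _ _).1 hv
    have hfi (i) : f i ∈ wordSpan ι D Ψ S {i} (n + 1) :=
      centeredPart_mul_wordSpan_le H.expectation_right (H.incl_mem_of_mem_right i) (hf i)
    have hsum : ∑ i ∈ f.support, f i ∈ wordSpan ι D Ψ S Set.univ (n + 1) :=
      sum_mem fun i _ ↦ wordSpan_mono (Set.subset_univ _) le_rfl (hfi i)
    refine (H.covariance_incl_add_self hd hsum).ge.trans' ?_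
    rw [H.covariance_sum_self hfi]
    exact Finset.sum_nonneg fun i _ ↦ H.covariance_self_nonneg_of_mem_mul
      (fun v hv ↦ ih (wordSpan_mono (Set.subset_univ _) le_rfl hv)) (hf i)

theorem map_star_mul_self_nonneg (H : IsPositiveCFree ι C D Φ Ψ S) {a : A}
    (ha : a ∈ StarAlgebra.adjoin ℂ (⋃ i, (S i : Set A))) : 0 ≤ Φ (star a * a) := by
  obtain ⟨n, hn⟩ :=
    exists_mem_wordSpan_of_mem_adjoin H.expectation_right H.incl_mem_of_mem_right ha
  rw [map_star_mul_eq_covariance_add]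
  exact add_nonneg (H.covariance_self_nonneg hn) (star_mul_self_nonneg _)

end IsPositiveCFree

theorem stmt_1_general {I A B : Type*} [CStarAlgebra B] [PartialOrder B] [StarOrderedRing B]
    [Ring A] [Algebra ℂ A] [StarRing A] [StarModule ℂ A]
    {ι : B →⋆ₐ[ℂ] A} {C D : StarSubalgebra ℂ B} (hDC : D ≤ C) (hD : IsClosed (D : Set B))
    {Φ Ψ : A →ₗ[ℂ] B} (hΦ : IsConditionalExpectation ι C Φ) (hΨ : IsConditionalExpectation ι D Ψ)
    {S : I → StarSubalgebra ℂ A} (hS : ∀ i, ∀ b ∈ C, ι b ∈ S i) (hfree : IsCFreeFamily Φ Ψ S)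
    (hΦpos : ∀ i, ∀ a ∈ S i, 0 ≤ Φ (star a * a)) (hΨpos : ∀ i, ∀ a ∈ S i, 0 ≤ Ψ (star a * a))
    {a : A} (ha : a ∈ StarAlgebra.adjoin ℂ (⋃ i, (S i : Set A))) :
    0 ≤ Φ (star a * a) ∧ 0 ≤ Ψ (star a * a) :=
  have H : IsPositiveCFree ι C D Φ Ψ S := ⟨hΦ, hΨ, hDC, hD, hS, hfree, hΦpos, hΨpos⟩
  ⟨H.map_star_mul_self_nonneg ha, H.self.map_star_mul_self_nonneg ha⟩

theorem stmt_1 {B A : Type*}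
    [CStarAlgebra B] [PartialOrder B] [StarOrderedRing B]
    [Ring A] [Algebra ℂ A] [StarRing A] [StarModule ℂ A]
    -- `𝔅` sits inside `𝔄` as a unital *-subalgebra:
    (ι : B →⋆ₐ[ℂ] A) (hι : Function.Injective ι)
    -- `𝔇` is a C*-subalgebra of `𝔅` (it contains the unit since it is a subalgebra):
    (D : StarSubalgebra ℂ B) (hD : IsClosed (D : Set B))
    -- `Φ : 𝔄 → 𝔅` is a conditional expectation:
    (Φ : A →ₗ[ℂ] B)
    (hΦbimod : ∀ (b b' : B) (a : A), Φ (ι b * a * ι b') = b * Φ a * b')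
    (hΦid : ∀ b : B, Φ (ι b) = b)
    -- `Ψ : 𝔄 → 𝔇` is a conditional expectation:
    (Ψ : A →ₗ[ℂ] B) (hΨD : ∀ a : A, Ψ a ∈ D)
    (hΨbimod : ∀ d d' : B, d ∈ D → d' ∈ D → ∀ a : A, Ψ (ι d * a * ι d') = d * Ψ a * d')
    (hΨid : ∀ d : B, d ∈ D → Ψ (ι d) = d)
    -- `𝔄₁, 𝔄₂` are *-subalgebras of `𝔄` containing `𝔅`:
    (S1 S2 : StarSubalgebra ℂ A) (hS1 : ∀ b : B, ι b ∈ S1) (hS2 : ∀ b : B, ι b ∈ S2)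
    -- which are c-free with respect to `(Φ, Ψ)`:
    (hfree : IsCFreeFamily Φ Ψ (fun t : Bool => if t then S1 else S2))
    -- and on which `Φ` and `Ψ` restrict to positive maps:
    (hΦ1 : ∀ a ∈ S1, 0 ≤ Φ (star a * a)) (hΨ1 : ∀ a ∈ S1, 0 ≤ Ψ (star a * a))
    (hΦ2 : ∀ a ∈ S2, 0 ≤ Φ (star a * a)) (hΨ2 : ∀ a ∈ S2, 0 ≤ Ψ (star a * a)) :
    ∀ a ∈ StarAlgebra.adjoin ℂ ((S1 : Set A) ∪ (S2 : Set A)),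
      0 ≤ Φ (star a * a) ∧ 0 ≤ Ψ (star a * a) := by
  intro a ha
  have hunion :
      ⋃ t : Bool, ((if t then S1 else S2 : StarSubalgebra ℂ A) : Set A) = (S1 : Set A) ∪ S2 :=
    iSup_bool_eq
  rw [← hunion] at ha
  exact stmt_1_general (C := ⊤) le_top hD
    ⟨fun _ ↦ trivial, fun _ _ ↦ hΦbimod _ _, fun _ ↦ hΦid _⟩ ⟨hΨD, hΨbimod _ _, hΨid _⟩
    (Bool.forall_bool.2 ⟨fun b _ ↦ hS2 b, fun b _ ↦ hS1 b⟩) hfree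
    (Bool.forall_bool.2 ⟨hΦ2, hΦ1⟩) (Bool.forall_bool.2 ⟨hΨ2, hΨ1⟩) ha
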